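/- arXiv:0806.3915 — 2 statements merged into one kernel-verified Lean document; each statement's English description precedes it below -/
import Mathlib

section
/- Let X be a proper metric space and ν a Borel regular probability measure on X. If for ν-almost every x ∈ X one has lim_{r→0} log ν(B(x,r))/log r = α, then the Hausdorff dimension of ν equals α, where the Hausdorff dimension of a measure is the infimum of the Hausdorff dimensions of sets of full measure. -/
open Filter MeasureTheory Topology Metric Set
open scoped ENNReal

noncomputable section

namespace GHM

/-! ### Coarse geometry of distance functions -/

/-- The Gromov product `(x|y)_w` of `x` and `y` seen from `w`, for a distance function `d`. -/
def gromov {X : Type*} (d : X → X → ℝ) (w x y : X) : ℝ :=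
  (d x w + d y w - d x y) / 2

/-- `d` is `δ`-hyperbolic (four point condition on Gromov products). -/
def IsHyperbolicWith {X : Type*} (d : X → X → ℝ) (δ : ℝ) : Prop :=
  ∀ w x y z : X, min (gromov d w x y) (gromov d w x z) - δ ≤ gromov d w y z

/-- `d` is Gromov hyperbolic. -/
def IsHyperbolic {X : Type*} (d : X → X → ℝ) : Prop :=
  ∃ δ : ℝ, 0 ≤ δ ∧ IsHyperbolicWith d δ

/-- `d` is a genuine metric. -/
structure IsMetricFun {X : Type*} (d : X → X → ℝ) : Prop where
  refl : ∀ x, d x x = 0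
  pos : ∀ x y, x ≠ y → 0 < d x y
  symm : ∀ x y, d x y = d y x
  triangle : ∀ x y z, d x z ≤ d x y + d y z

/-- `f` is a `(Λ,c)`-quasi-isometric embedding from `(X,dX)` to `(Y,dY)`. -/
def QIEmbed {X Y : Type*} (dX : X → X → ℝ) (dY : Y → Y → ℝ)
    (f : X → Y) (Λ c : ℝ) : Prop :=
  ∀ x x' : X, dX x x' / Λ - c ≤ dY (f x) (f x') ∧ dY (f x) (f x') ≤ Λ * dX x x' + c

/-- `(X,dX)` and `(Y,dY)` are quasi-isometric. -/
def QuasiIsometric {X Y : Type*} (dX : X → X → ℝ) (dY : Y → Y → ℝ) : Prop :=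
  ∃ (f : X → Y) (Λ c C : ℝ), 1 ≤ Λ ∧ 0 ≤ c ∧ 0 ≤ C ∧
    QIEmbed dX dY f Λ c ∧ ∀ y : Y, ∃ x : X, dY (f x) y ≤ C

variable {G : Type*} [Group G]

/-- Word length of `g` with respect to the (symmetrized) finite set `S`. -/
def wordLength (S : Finset G) (g : G) : ℕ :=
  sInf {n : ℕ | ∃ l : List G, l.length = n ∧ (∀ a ∈ l, a ∈ S ∨ a⁻¹ ∈ S) ∧ l.prod = g}

/-- The word metric associated with a finite generating set `S`. -/
def wordDist (S : Finset G) (x y : G) : ℝ := wordLength S (x⁻¹ * y)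

/-- `S` generates the group. -/
def Generates (S : Finset G) : Prop := Subgroup.closure (S : Set G) = ⊤

/-- The standard metric on `ℤ`. -/
def intDist (m n : ℤ) : ℝ := |(m : ℝ) - (n : ℝ)|

/-- `G` is a non-elementary hyperbolic group: finitely generated, its word metrics are
Gromov hyperbolic, it is infinite, and it is not quasi-isometric to `ℤ`. -/
def NonElemHyperbolic (G : Type*) [Group G] : Prop :=
  Infinite G ∧ (∃ S : Finset G, Generates S) ∧
    ∀ S : Finset G, Generates S →
      IsHyperbolic (wordDist S) ∧ ¬ QuasiIsometric (wordDist S) intDist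

/-- `d` is invariant under left translations. -/
def LeftInvariant (d : G → G → ℝ) : Prop := ∀ g x y : G, d (g * x) (g * y) = d x y

/-- `d` belongs to the class `𝒟(Γ)`: it is a left-invariant Gromov hyperbolic metric on the
group, quasi-isometric to a word metric of a finite generating set. -/
def MemD (d : G → G → ℝ) : Prop :=
  IsMetricFun d ∧ LeftInvariant d ∧ IsHyperbolic d ∧
    ∃ S : Finset G, Generates S ∧ QuasiIsometric d (wordDist S)

/-! ### Random walks -/

/-- `μ` is (the density of) a probability measure on the (countable) group. -/
def IsProbDensity (μ : G → ℝ) : Prop := (∀ g, 0 ≤ μ g) ∧ HasSum μ 1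

/-- `μ` is symmetric. -/
def IsSymmetric (μ : G → ℝ) : Prop := ∀ g : G, μ g⁻¹ = μ g

/-- The support of `μ` generates `G`. -/
def GeneratesSupp (μ : G → ℝ) : Prop := Subgroup.closure {g : G | μ g ≠ 0} = ⊤

open scoped Classical in
/-- Convolution powers `μ^n` of `μ`. -/
def convPow (μ : G → ℝ) : ℕ → G → ℝ
  | 0 => fun g => if g = 1 then 1 else 0
  | n + 1 => fun g => ∑' y : G, convPow μ n y * μ (y⁻¹ * g)

/-- The Green function `G(x,y) = ∑_n μ^n(x⁻¹y)`. -/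
def greenFn (μ : G → ℝ) (x y : G) : ℝ := ∑' n : ℕ, convPow μ n (x⁻¹ * y)

/-- The random walk is transient, i.e. `G(e,e) = ∑_n μ^n(e) < ∞`. -/
def Transient (μ : G → ℝ) : Prop := Summable fun n : ℕ => convPow μ n (1 : G)

/-- Successive positions of a walk started at `x` with increments `l`. -/
def walkPositions (x : G) (l : List G) : List G := l.scanl (fun p a => p * a) x

/-- The increments `l` describe a trajectory from `x` which hits `y` for the first time at
its final position. -/
def IsFirstHitPath (x y : G) (l : List G) : Prop :=
  (walkPositions x l).getLast? = some y ∧ y ∉ (walkPositions x l).dropLast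

/-- `F(x,y)`: the probability that the `μ`-random walk started at `x` ever hits `y`. -/
def hitProb (μ : G → ℝ) (x y : G) : ℝ :=
  ∑' l : {l : List G // IsFirstHitPath x y l}, ((l : List G).map μ).prod

/-- The Green metric `d_G(x,y) = - log F(x,y)`. -/
def greenDist (μ : G → ℝ) (x y : G) : ℝ := - Real.log (hitProb μ x y)

/-- `μ` has a finite first moment with respect to `d`. -/
def FiniteFirstMoment (d : G → G → ℝ) (μ : G → ℝ) : Prop :=
  Summable fun g : G => d 1 g * μ g

/-- `μ` has an exponential moment with respect to `d`. -/
def HasExpMoment (d : G → G → ℝ) (μ : G → ℝ) : Prop :=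
  ∃ lam : ℝ, 0 < lam ∧ Summable fun g : G => Real.exp (lam * d 1 g) * μ g

/-- The entropy `H(μ^n) = -∑_γ μ^n(γ) log μ^n(γ)` of the `n`-th convolution power. -/
def entropyAt (μ : G → ℝ) (n : ℕ) : ℝ :=
  - ∑' g : G, convPow μ n g * Real.log (convPow μ n g)

/-- `h` is the asymptotic entropy of the walk. -/
def HasEntropy (μ : G → ℝ) (h : ℝ) : Prop :=
  Tendsto (fun n : ℕ => entropyAt μ n / n) atTop (𝓝 h)

/-- `v` is the logarithmic volume growth of `(G,d)` (seen from the identity). -/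
def HasGrowth (d : G → G → ℝ) (v : ℝ) : Prop :=
  Filter.limsup (fun R : ℝ => Real.log (Nat.card {g : G // d 1 g ≤ R}) / R) atTop = v

/-- The position `Z_n = ω_0 ω_1 ⋯ ω_{n-1}` of the random walk at time `n`, given the
sequence of increments `ω`. -/
def walkPos (n : ℕ) (ω : ℕ → G) : G := ((List.range n).map ω).prod

/-- `P` is the law on the space of increment sequences of an i.i.d. sequence of law `μ`:
cylinders have product measure.  (This characterizes the path measure of the random walk.) -/
def IsWalkMeasure [MeasurableSpace G] (μ : G → ℝ) (P : Measure (ℕ → G)) : Prop :=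
  IsProbabilityMeasure P ∧
    ∀ (n : ℕ) (g : Fin n → G),
      P {ω : ℕ → G | ∀ i : Fin n, ω (i : ℕ) = g i} = ∏ i : Fin n, ENNReal.ofReal (μ (g i))

/-! ### The Gromov boundary, visual metrics, harmonic and quasiconformal measures -/

/-- A sequence tends to infinity if Gromov products (at the base point `1`) go to `∞`. -/
def TendstoInfinity (d : G → G → ℝ) (u : ℕ → G) : Prop :=
  Tendsto (fun p : ℕ × ℕ => gromov d 1 (u p.1) (u p.2)) atTop atTop

/-- A realization of the Gromov boundary of `(G,d)` as an abstract type `B`: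
`conv u b` means that the sequence `u` converges at infinity to the boundary point `b`.
The group acts on its boundary by `smul`. -/
structure BoundaryData (G : Type*) [Group G] (d : G → G → ℝ) (B : Type*) where
  conv : (ℕ → G) → B → Prop
  smul : G → B → B
  conv_unique : ∀ u b b', conv u b → conv u b' → b = b'
  exists_conv : ∀ u, TendstoInfinity d u → ∃ b, conv u b
  conv_tendstoInfinity : ∀ u b, conv u b → TendstoInfinity d u
  conv_iff : ∀ u v b, conv u b →
    (conv v b ↔ Tendsto (fun n => gromov d 1 (u n) (v n)) atTop atTop)
  conv_surj : ∀ b, ∃ u, conv u b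
  smul_conv : ∀ (γ : G) (u) (b), conv u b → conv (fun n => γ * u n) (smul γ b)

/-- Asymptotic Gromov product of two sequences. -/
def seqGromov (d : G → G → ℝ) (u v : ℕ → G) : ℝ :=
  Filter.liminf (fun n => gromov d 1 (u n) (v n)) atTop

/-- The metric of `B` is a visual metric of parameter `ε` (with comparison constant `C`)
for the hyperbolic distance `d` on the group:  `dist(a,b) ≍ exp(-ε (a|b))`. -/
def IsVisualMetric {B : Type*} [MetricSpace B] (d : G → G → ℝ)
    (bd : BoundaryData G d B) (ε C : ℝ) : Prop :=
  0 < ε ∧ 0 < C ∧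
    ∀ u v b b', bd.conv u b → bd.conv v b' → b ≠ b' →
      dist b b' ≤ C * Real.exp (-ε * seqGromov d u v) ∧
      Real.exp (-ε * seqGromov d u v) ≤ C * dist b b'

/-- `ν` is the harmonic measure of the random walk of law `μ` on the boundary `B`:
it is the law of the almost sure limit `Z_∞` of the walk on the boundary. -/
def IsHarmonicMeasure {B : Type*} [MeasurableSpace G] [MeasurableSpace B]
    (d : G → G → ℝ) (bd : BoundaryData G d B) (μ : G → ℝ)
    (P : Measure (ℕ → G)) (ν : Measure B) : Prop :=
  IsWalkMeasure μ P ∧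
    ∃ Zinf : (ℕ → G) → B, Measurable Zinf ∧
      (∀ᵐ ω ∂P, bd.conv (fun n => walkPos n ω) (Zinf ω)) ∧ ν = P.map Zinf

/-- Busemann function `β_b(x,y)` of the boundary point `b`. -/
def busemann {B : Type*} (d : G → G → ℝ) (bd : BoundaryData G d B)
    (x y : G) (b : B) : ℝ :=
  sSup {t : ℝ | ∃ u, bd.conv u b ∧
    t = Filter.limsup (fun n => d x (u n) - d y (u n)) atTop}

/-- The image measure `γ^*ρ`, `γ^*ρ(A) = ρ(γA)`. -/
def actPush {B : Type*} [MeasurableSpace B] {d : G → G → ℝ}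
    (bd : BoundaryData G d B) (γ : G) (ρ : Measure B) : Measure B :=
  ρ.map (bd.smul γ⁻¹)

/-- `ρ` is a quasiconformal measure on the boundary for `(G,d)` of logarithmic growth
parameter `v`: `γ^*ρ` and `ρ` are mutually absolutely continuous, with density
`dγ^*ρ/dρ ≍ exp (v β_b(1,γ⁻¹))` (uniformly in `γ`). -/
def IsQuasiconformalMeasure {B : Type*} [MeasurableSpace B] {d : G → G → ℝ}
    (bd : BoundaryData G d B) (ρ : Measure B) (v : ℝ) : Prop :=
  ∃ C : ℝ, 0 < C ∧ ∀ γ : G,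
    actPush bd γ ρ ≪ ρ ∧ ρ ≪ actPush bd γ ρ ∧
      ∀ᵐ b ∂ρ,
        (actPush bd γ ρ).rnDeriv ρ b
            ≤ ENNReal.ofReal (C * Real.exp (v * busemann d bd 1 γ⁻¹ b)) ∧
        ENNReal.ofReal (C⁻¹ * Real.exp (v * busemann d bd 1 γ⁻¹ b))
            ≤ (actPush bd γ ρ).rnDeriv ρ b

/-- `ν` is Ahlfors regular of dimension `α`: `ν(B(b,r)) ≍ r^α`. -/
def AhlforsRegularOfDim {B : Type*} [MetricSpace B] [MeasurableSpace B]
    (ν : Measure B) (α : ℝ) : Prop :=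
  ∃ C : ℝ, 0 < C ∧ ∀ (b : B) (r : ℝ), 0 < r → r ≤ Metric.diam (Set.univ : Set B) →
    ENNReal.ofReal (C⁻¹ * r ^ α) ≤ ν (Metric.ball b r) ∧
      ν (Metric.ball b r) ≤ ENNReal.ofReal (C * r ^ α)

/-- The Hausdorff dimension of a measure: the infimum of the Hausdorff dimensions of sets of
full measure. -/
def measureDim {B : Type*} [EMetricSpace B] [MeasurableSpace B] (ν : Measure B) : ℝ≥0∞ :=
  ⨅ (A : Set B) (_ : ν Aᶜ = 0), dimH A

/-! ### Word geodesics -/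

/-- `p 0, …, p n` is a geodesic segment for the word metric of `S`. -/
def IsWordGeodesic (S : Finset G) (n : ℕ) (p : ℕ → G) : Prop :=
  ∀ i j : ℕ, i ≤ n → j ≤ n → wordDist S (p i) (p j) = |(i : ℝ) - (j : ℝ)|

/-- `v` lies within distance `r` of some word geodesic segment from `x` to `y`. -/
def NearWordGeodesic (S : Finset G) (x y v : G) (r : ℝ) : Prop :=
  ∃ (n : ℕ) (p : ℕ → G), IsWordGeodesic S n p ∧ p 0 = x ∧ p n = y ∧
    ∃ i ≤ n, wordDist S v (p i) ≤ r

/-! ### Martin boundary -/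

/-- The Martin kernel `K(x,y) = G(x,y)/G(e,y)`. -/
def martinKernel (μ : G → ℝ) (x y : G) : ℝ := greenFn μ x y / greenFn μ 1 y

/-- The embedding `y ↦ K(·,y)` of the group in `C(G)` (pointwise topology). -/
def martinMap (μ : G → ℝ) (y : G) : G → ℝ := fun x => martinKernel μ x y

/-- The Martin boundary: the boundary of the image of the group under the Martin embedding
in the space of functions with the topology of pointwise convergence. -/
def martinBoundary (μ : G → ℝ) : Set (G → ℝ) :=
  closure (Set.range (martinMap μ)) \ Set.range (martinMap μ)

/-- `h` is a `μ`-harmonic function. -/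
def IsHarmonicFn (μ : G → ℝ) (h : G → ℝ) : Prop :=
  ∀ x : G, h x = ∑' y : G, h y * μ (x⁻¹ * y)

/-- `h` is a minimal positive harmonic function. -/
def IsMinimalHarmonic (μ : G → ℝ) (h : G → ℝ) : Prop :=
  IsHarmonicFn μ h ∧ (∀ x, 0 < h x) ∧
    ∀ u : G → ℝ, IsHarmonicFn μ u → (∀ x, 0 ≤ u x) → (∀ x, u x ≤ h x) →
      ∃ c : ℝ, u = fun x => c * h x

/-! ### Metric space versions (geodesic and quasiruled spaces) -/

/-- A geodesic metric space. -/
def IsGeodesicSpace (X : Type*) [MetricSpace X] : Prop :=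
  ∀ x y : X, ∃ f : ℝ → X, f 0 = x ∧ f (dist x y) = y ∧
    ∀ s ∈ Set.Icc (0:ℝ) (dist x y), ∀ t ∈ Set.Icc (0:ℝ) (dist x y),
      dist (f s) (f t) = |s - t|

/-- `f : [a,b] → Y` is a `(Λ,c)`-quasigeodesic segment. -/
def IsQuasigeodesicOn {Y : Type*} [MetricSpace Y] (f : ℝ → Y) (a b Λ c : ℝ) : Prop :=
  ∀ s ∈ Set.Icc a b, ∀ t ∈ Set.Icc a b,
    |s - t| / Λ - c ≤ dist (f s) (f t) ∧ dist (f s) (f t) ≤ Λ * |s - t| + c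

/-- `f : [a,b] → Y` is a `τ`-quasiruler: Gromov products of triples along it are `≤ τ`. -/
def IsQuasirulerOn {Y : Type*} [MetricSpace Y] (f : ℝ → Y) (a b τ : ℝ) : Prop :=
  ∀ s t u : ℝ, s ∈ Set.Icc a b → t ∈ Set.Icc a b → u ∈ Set.Icc a b → s ≤ t → t ≤ u →
    dist (f s) (f t) + dist (f t) (f u) ≤ dist (f s) (f u) + 2 * τ

/-- A quasiruled metric space: for some constants `(Λ,c,τ)` every pair of points is joined
by a `(Λ,c)`-quasigeodesic, and every `(Λ,c)`-quasigeodesic is a `τ`-quasiruler. -/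
def Quasiruled (Y : Type*) [MetricSpace Y] : Prop :=
  ∃ Λ c τ : ℝ, 1 ≤ Λ ∧ 0 ≤ c ∧ 0 ≤ τ ∧
    (∀ x y : Y, ∃ (a b : ℝ) (f : ℝ → Y), a ≤ b ∧ f a = x ∧ f b = y ∧
      IsQuasigeodesicOn f a b Λ c) ∧
    ∀ (f : ℝ → Y) (a b : ℝ), IsQuasigeodesicOn f a b Λ c → IsQuasirulerOn f a b τ

/-- A metric space is hyperbolic. -/
def HypSpace (Y : Type*) [MetricSpace Y] : Prop :=
  IsHyperbolic (fun x y : Y => dist x y)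

/-- `f` is a quasi-isometry between metric spaces. -/
def MetricQI {X Y : Type*} [MetricSpace X] [MetricSpace Y] (f : X → Y) : Prop :=
  ∃ Λ c C : ℝ, 1 ≤ Λ ∧ 0 ≤ c ∧ 0 ≤ C ∧
    QIEmbed (fun a b : X => dist a b) (fun a b : Y => dist a b) f Λ c ∧
    ∀ y : Y, ∃ x : X, dist (f x) y ≤ C


/-- Upper bound: lower mass bound on balls gives upper bound of the dimension. -/
theorem aux_upper {X : Type*} [MetricSpace X] [SecondCountableTopology X]
    [MeasurableSpace X] [BorelSpace X]
    (ν : Measure X) [IsProbabilityMeasure ν] (β : NNReal) (S : Set X) (δ : ℝ) (hδ : 0 < δ)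
    (h : ∀ x ∈ S, ∀ r : ℝ, 0 < r → r < δ → ENNReal.ofReal r ^ (β : ℝ) ≤ ν (ball x r)) :
    dimH S ≤ β := by
  apply dimH_le_of_hausdorffMeasure_ne_top
  have key : ∀ n : ℕ, ∃ u : Set X, u ⊆ S ∧
      (u.PairwiseDisjoint fun x => closedBall x (δ / (n + 2))) ∧
      ∀ a ∈ S, ∃ b ∈ u, closedBall a (δ / (n + 2)) ⊆ closedBall b (5 * (δ / (n + 2))) := by
    intro n
    exact Vitali.exists_disjoint_subfamily_covering_enlargement_closedBall S (fun x => x)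
      (fun _ => δ / (n + 2)) (δ / (n + 2)) (fun _ _ => le_rfl) 5 (by norm_num)
  choose u huS hud huc using key
  have rpos : ∀ n : ℕ, 0 < δ / ((n : ℝ) + 2) := fun n => by positivity
  have rlt : ∀ n : ℕ, δ / ((n : ℝ) + 2) < δ := fun n => by
    rw [div_lt_iff₀ (by positivity)]
    have : (0 : ℝ) ≤ n := n.cast_nonneg
    nlinarith
  have hcount : ∀ n, (u n).Countable := fun n =>
    (hud n).countable_of_nonempty_interior fun x _ =>
      ⟨x, ball_subset_interior_closedBall (mem_ball_self (rpos n))⟩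
  have : ∀ n, Countable (u n) := fun n => (hcount n).to_subtype
  have hdiam : ∀ n (i : u n), ediam (closedBall (i : X) (5 * (δ / (n + 2)))) ≤
      ENNReal.ofReal (10 * (δ / (n + 2))) := by
    intro n i
    refine ediam_le_of_forall_dist_le fun x hx y hy => ?_
    have h1 := dist_triangle_right x y (i : X)
    have hx' := mem_closedBall.1 hx
    have hy' := mem_closedBall.1 hy
    linarith
  have hlim : Tendsto (fun n : ℕ => ENNReal.ofReal (10 * (δ / ((n : ℝ) + 2)))) atTop (𝓝 0) := by
    have : Tendsto (fun n : ℕ => 10 * (δ / ((n : ℝ) + 2))) atTop (𝓝 (10 * 0)) := by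
      apply Tendsto.const_mul
      apply Tendsto.const_div_atTop
      exact tendsto_atTop_add_const_right _ _ tendsto_natCast_atTop_atTop
    simpa using ENNReal.tendsto_ofReal this
  have main := Measure.hausdorffMeasure_le_liminf_tsum (ι := fun n : ℕ => (u n : Type _))
    (β : ℝ) S (l := atTop) _ hlim
    (fun n (i : u n) => closedBall (i : X) (5 * (δ / (n + 2))))
    (Eventually.of_forall hdiam)
    (Eventually.of_forall fun n x hx => by
      obtain ⟨b, hb, hsub⟩ := huc n x hx
      exact mem_iUnion.2 ⟨⟨b, hb⟩, hsub (mem_closedBall_self (rpos n).le)⟩)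
  have bound : ∀ n : ℕ, ∑' i : u n, ediam (closedBall (i : X) (5 * (δ / (n + 2)))) ^ (β : ℝ)
      ≤ ENNReal.ofReal 10 ^ (β : ℝ) := by
    intro n
    calc ∑' i : u n, ediam (closedBall (i : X) (5 * (δ / (n + 2)))) ^ (β : ℝ)
        ≤ ∑' i : u n, ENNReal.ofReal 10 ^ (β : ℝ) * ν (closedBall (i : X) (δ / (n + 2))) := by
          refine ENNReal.tsum_le_tsum fun i => ?_
          calc ediam (closedBall (i : X) (5 * (δ / (n + 2)))) ^ (β : ℝ)
              ≤ ENNReal.ofReal (10 * (δ / (n + 2))) ^ (β : ℝ) :=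
                ENNReal.rpow_le_rpow (hdiam n i) β.2
            _ = ENNReal.ofReal 10 ^ (β : ℝ) * ENNReal.ofReal (δ / (n + 2)) ^ (β : ℝ) := by
                rw [ENNReal.ofReal_mul (by norm_num), ENNReal.mul_rpow_of_nonneg _ _ β.coe_nonneg]
            _ ≤ _ := by
                gcongr
                exact (h i (huS n i.2) _ (rpos n) (rlt n)).trans (measure_mono ball_subset_closedBall)
      _ = ENNReal.ofReal 10 ^ (β : ℝ) * ∑' i : u n, ν (closedBall (i : X) (δ / (n + 2))) :=
          ENNReal.tsum_mul_left
      _ ≤ ENNReal.ofReal 10 ^ (β : ℝ) * 1 := by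
          gcongr
          refine (tsum_meas_le_meas_iUnion_of_disjoint ν
            (fun i : u n => (isClosed_closedBall (x := (i : X))).measurableSet) ?_).trans prob_le_one
          intro i j hij
          exact hud n i.2 j.2 (fun h => hij (Subtype.ext h))
      _ = _ := mul_one _
  have : μH[(β : ℝ)] S ≤ ENNReal.ofReal 10 ^ (β : ℝ) := by
    refine main.trans ?_
    refine (liminf_le_liminf (v := fun _ => ENNReal.ofReal 10 ^ (β : ℝ))
      (Eventually.of_forall bound)).trans ?_
    simp
  exact ne_top_of_le_ne_top (ENNReal.rpow_ne_top_of_nonneg β.2 ENNReal.ofReal_ne_top) this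

/-- Lower bound (mass distribution principle). -/
theorem aux_lower {X : Type*} [MetricSpace X]
    [MeasurableSpace X] [BorelSpace X]
    (ν : Measure X) [IsProbabilityMeasure ν] (β : NNReal) (hβ : 0 < β) (S : Set X)
    (δ : ℝ) (hδ : 0 < δ)
    (h : ∀ x ∈ S, ∀ r : ℝ, 0 < r → r < δ → ν (ball x r) ≤ ENNReal.ofReal r ^ (β : ℝ))
    (hS : ν S ≠ 0) :
    (β : ℝ≥0∞) ≤ dimH S := by
  apply le_dimH_of_hausdorffMeasure_ne_zero
  have hle : ν.restrict S ≤ μH[(β : ℝ)] := by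
    refine Measure.le_hausdorffMeasure _ _ (ENNReal.ofReal (δ / 2)) (by simpa using hδ) ?_
    intro s hs
    have hfin : ediam s ≠ ∞ := ne_top_of_le_ne_top ENNReal.ofReal_ne_top hs
    have h1 : ν.restrict S s ≤ ν (closure s ∩ S) :=
      (measure_mono subset_closure).trans_eq (Measure.restrict_apply isClosed_closure.measurableSet)
    rcases (closure s ∩ S).eq_empty_or_nonempty with he | ⟨x, hxs, hxS⟩
    · rw [he, measure_empty] at h1
      exact h1.trans (by simp)
    refine h1.trans ?_
    have hD : (ediam s).toReal ≤ δ / 2 := ENNReal.toReal_le_of_le_ofReal (by positivity) hs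
    have hev : ∀ᶠ r in 𝓝[>] (ediam s).toReal,
        ν (closure s ∩ S) ≤ ENNReal.ofReal r ^ (β : ℝ) := by
      have : Ioo (ediam s).toReal δ ∈ 𝓝[>] (ediam s).toReal :=
        Ioo_mem_nhdsGT (by linarith)
      filter_upwards [this] with r hr
      refine (measure_mono ?_).trans (h x hxS r (ENNReal.toReal_nonneg.trans_lt hr.1) hr.2)
      intro y hy
      rw [mem_ball, dist_edist]
      refine lt_of_le_of_lt (ENNReal.toReal_mono hfin ?_) hr.1
      rw [← ediam_closure]
      exact edist_le_ediam_of_mem hy.1 hxs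
    have ht : Tendsto (fun r : ℝ => ENNReal.ofReal r ^ (β : ℝ)) (𝓝[>] (ediam s).toReal)
        (𝓝 (ediam s ^ (β : ℝ))) := by
      have hc : Continuous fun r : ℝ => ENNReal.ofReal r ^ (β : ℝ) :=
        ENNReal.continuous_rpow_const.comp ENNReal.continuous_ofReal
      have := hc.tendsto (ediam s).toReal
      rw [ENNReal.ofReal_toReal hfin] at this
      exact this.mono_left nhdsWithin_le_nhds
    exact ge_of_tendsto ht hev
  have h2 := hle S
  rw [Measure.restrict_apply_self] at h2
  exact fun h0 => hS (le_antisymm (h2.trans h0.le) zero_le)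

theorem aux_main
    {X : Type*} [MetricSpace X] [ProperSpace X] [MeasurableSpace X] [BorelSpace X]
    (ν : Measure X) [IsProbabilityMeasure ν] (α : ℝ)
    (hdim : ∀ᵐ x ∂ν,
      Tendsto (fun r : ℝ => Real.log (ν (Metric.ball x r)).toReal / Real.log r)
        (𝓝[>] (0 : ℝ)) (𝓝 α)) :
    (⨅ (A : Set X) (_ : ν Aᶜ = 0), dimH A) = ENNReal.ofReal α := by
  have hpos : ∀ᵐ x ∂ν, ∀ r : ℝ, 0 < r → 0 < ν (ball x r) := by
    filter_upwards [Measure.support_mem_ae (μ := ν)] with x hx r hr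
    exact (Measure.mem_support_iff_forall x).1 hx _ (ball_mem_nhds x hr)
  -- extraction of a uniform scale
  have hscale : ∀ p : ℝ → Prop, (∀ᶠ r in 𝓝[>] (0 : ℝ), p r) →
      ∃ n : ℕ, ∀ r : ℝ, 0 < r → r < 1 / ((n : ℝ) + 1) → p r := by
    intro p hp
    obtain ⟨e, he, hsub⟩ := mem_nhdsGT_iff_exists_Ioo_subset.1 hp
    obtain ⟨n, hn⟩ := exists_nat_one_div_lt (show (0 : ℝ) < e from he)
    exact ⟨n, fun r h0 h1 => hsub ⟨h0, h1.trans hn⟩⟩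
  have hlt1 : ∀ᶠ r in 𝓝[>] (0 : ℝ), r ∈ Ioo (0 : ℝ) 1 := Ioo_mem_nhdsGT one_pos
  apply le_antisymm
  · apply ENNReal.le_of_forall_pos_le_add
    intro ε hε _
    let β : NNReal := α.toNNReal + ε
    have hβα : α < (β : ℝ) := by
      have := Real.le_coe_toNNReal α
      have h2 : (0 : ℝ) < ε := hε
      simp only [β, NNReal.coe_add]; linarith
    let E : ℕ → Set X := fun n => {x | ∀ r : ℝ, 0 < r → r < 1 / ((n : ℝ) + 1) →
      ENNReal.ofReal r ^ (β : ℝ) ≤ ν (ball x r)}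
    have hfull : ν (⋃ n, E n)ᶜ = 0 := by
      change ∀ᵐ x ∂ν, x ∈ ⋃ n, E n
      filter_upwards [hdim, hpos] with x hx hp
      obtain ⟨n, hn⟩ := hscale _ ((hx.eventually_lt_const hβα).and hlt1)
      refine mem_iUnion.2 ⟨n, fun r h0 h1 => ?_⟩
      obtain ⟨hq, hr⟩ := hn r h0 h1
      have hlog : Real.log r < 0 := Real.log_neg hr.1 hr.2
      have hν : 0 < (ν (ball x r)).toReal := ENNReal.toReal_pos (hp r h0).ne' (measure_ne_top _ _)
      rw [div_lt_iff_of_neg hlog, ← Real.log_rpow h0] at hq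
      have := (Real.log_lt_log_iff (Real.rpow_pos_of_pos h0 _) hν).1 hq
      rw [ENNReal.ofReal_rpow_of_pos h0]
      exact ENNReal.ofReal_le_of_le_toReal this.le
    refine (iInf₂_le (f := fun (A : Set X) (_ : ν Aᶜ = 0) => dimH A) _ hfull).trans ?_
    rw [dimH_iUnion]
    refine iSup_le fun n => ?_
    refine (aux_upper ν β (E n) (1 / ((n : ℝ) + 1)) (by positivity) fun x hx => hx).trans ?_
    simp [β, ENNReal.ofReal]
  · refine le_iInf₂ fun A hA => ?_
    refine le_of_forall_lt fun b hb => ?_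
    obtain ⟨β, hbβ, hβα'⟩ := ENNReal.lt_iff_exists_nnreal_btwn.1 hb
    have hβα : (β : ℝ) < α := by
      rw [ENNReal.ofReal, ENNReal.coe_lt_coe, Real.lt_toNNReal_iff_coe_lt] at hβα'
      exact hβα'
    have hβ0 : 0 < β := by
      have := lt_of_le_of_lt (zero_le (a := b)) hbβ
      exact_mod_cast this
    refine hbβ.trans_le ?_
    let E : ℕ → Set X := fun n => {x | ∀ r : ℝ, 0 < r → r < 1 / ((n : ℝ) + 1) →
      ν (ball x r) ≤ ENNReal.ofReal r ^ (β : ℝ)}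
    have hfull : ∀ᵐ x ∂ν, x ∈ ⋃ n, (E n ∩ A) := by
      have hA' : ∀ᵐ x ∂ν, x ∈ A := hA
      filter_upwards [hdim, hpos, hA'] with x hx hp hxA
      obtain ⟨n, hn⟩ := hscale _ ((hx.eventually_const_lt hβα).and hlt1)
      refine mem_iUnion.2 ⟨n, fun r h0 h1 => ?_, hxA⟩
      obtain ⟨hq, hr⟩ := hn r h0 h1
      have hlog : Real.log r < 0 := Real.log_neg hr.1 hr.2
      have hν : 0 < (ν (ball x r)).toReal := ENNReal.toReal_pos (hp r h0).ne' (measure_ne_top _ _)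
      rw [lt_div_iff_of_neg hlog, ← Real.log_rpow h0] at hq
      have := (Real.log_lt_log_iff hν (Real.rpow_pos_of_pos h0 _)).1 hq
      rw [ENNReal.ofReal_rpow_of_pos h0]
      exact (ENNReal.le_ofReal_iff_toReal_le (measure_ne_top _ _) (by positivity)).2 this.le
    have : ∃ n, ν (E n ∩ A) ≠ 0 := by
      by_contra! hcon
      have h0 : ν (⋃ n, (E n ∩ A)) = 0 := measure_iUnion_null hcon
      have h1 : ∀ᵐ x ∂ν, x ∉ ⋃ n, (E n ∩ A) := measure_eq_zero_iff_ae_notMem.1 h0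
      obtain ⟨x, hx, hx'⟩ := (hfull.and h1).exists
      exact hx' hx
    obtain ⟨n, hn⟩ := this
    exact (aux_lower ν β hβ0 (E n ∩ A) (1 / ((n : ℝ) + 1)) (by positivity)
      (fun x hx => hx.1) hn).trans (dimH_mono inter_subset_right)

/-- **Proposition 4.2.**  Let `X` be a proper metric space and `ν` a Borel (regular)
probability measure on `X`.  If for `ν`-almost every `x` the pointwise dimension
`lim_{r→0} log ν(B(x,r))/log r` equals `α`, then the Hausdorff dimension of `ν` (the
infimum of Hausdorff dimensions of sets of full measure) equals `α`. -/
theorem dimension_from_pointwise_dimension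
    {X : Type*} [MetricSpace X] [ProperSpace X] [MeasurableSpace X] [BorelSpace X]
    (ν : Measure X) [IsProbabilityMeasure ν] (α : ℝ)
    (hdim : ∀ᵐ x ∂ν,
      Tendsto (fun r : ℝ => Real.log (ν (Metric.ball x r)).toReal / Real.log r)
        (𝓝[>] (0 : ℝ)) (𝓝 α)) :
    measureDim ν = ENNReal.ofReal α := by
  exact aux_main ν α hdim

end GHM
end
end

section
/- Let Γ be a hyperbolic group and |·| the word metric of a finite generating set, regarded as a left-invariant metric on Γ. Define d(x,y) = |x^{-1}y| + log(1 + |x^{-1}y|). Then d is a left-invariant metric on Γ satisfying |x^{-1}y| ≤ d(x,y) ≤ 2|x^{-1}y| (hence d is quasi-isometric to the word metric), but (Γ,d) is not Gromov hyperbolic. In particular, every hyperbolic group admits a left-invariant metric quasi-isometric to a word metric which is not hyperbolic. -/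
open Filter MeasureTheory Topology Metric Set
open scoped ENNReal

noncomputable section

namespace GHM

variable {G : Type*} [Group G]

/-! ### Helper lemmas -/

theorem wl_exists (S : Finset G) (hS : Generates S) (g : G) :
    ∃ l : List G, l.length = wordLength S g ∧ (∀ a ∈ l, a ∈ S ∨ a⁻¹ ∈ S) ∧ l.prod = g := by
  have hne : {n : ℕ | ∃ l : List G, l.length = n ∧ (∀ a ∈ l, a ∈ S ∨ a⁻¹ ∈ S) ∧
      l.prod = g}.Nonempty := by
    have hg : g ∈ Subgroup.closure (S : Set G) := by
      rw [show Subgroup.closure (S : Set G) = ⊤ from hS]; trivial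
    rw [← Subgroup.mem_toSubmonoid, Subgroup.closure_toSubmonoid] at hg
    obtain ⟨l, hl, hp⟩ := Submonoid.exists_list_of_mem_closure hg
    exact ⟨l.length, l, rfl, by simpa using hl, hp⟩
  exact Nat.sInf_mem hne

theorem wl_le (S : Finset G) (l : List G) (hl : ∀ a ∈ l, a ∈ S ∨ a⁻¹ ∈ S) :
    wordLength S l.prod ≤ l.length :=
  Nat.sInf_le ⟨l, rfl, hl, rfl⟩

theorem wl_one (S : Finset G) : wordLength S (1 : G) = 0 := by
  have := wl_le S ([] : List G) (by simp)
  simpa using this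

theorem wl_mul (S : Finset G) (hS : Generates S) (g h : G) :
    wordLength S (g * h) ≤ wordLength S g + wordLength S h := by
  obtain ⟨l, h1, h2, h3⟩ := wl_exists S hS g
  obtain ⟨m, k1, k2, k3⟩ := wl_exists S hS h
  have := wl_le S (l ++ m) (by
    intro a ha
    rcases List.mem_append.1 ha with h | h
    · exact h2 a h
    · exact k2 a h)
  rw [List.prod_append, h3, k3, List.length_append, h1, k1] at this
  exact this

theorem wl_inv_le (S : Finset G) (hS : Generates S) (g : G) :
    wordLength S g⁻¹ ≤ wordLength S g := by
  obtain ⟨l, h1, h2, h3⟩ := wl_exists S hS g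
  have := wl_le S ((l.map (fun x => x⁻¹)).reverse) (by
    intro a ha
    simp only [List.mem_reverse, List.mem_map] at ha
    obtain ⟨b, hb, rfl⟩ := ha
    rw [inv_inv]
    exact (h2 b hb).symm)
  rw [← List.prod_inv_reverse, h3] at this
  simpa [h1] using this

theorem wl_inv (S : Finset G) (hS : Generates S) (g : G) :
    wordLength S g⁻¹ = wordLength S g := by
  apply le_antisymm (wl_inv_le S hS g)
  simpa using wl_inv_le S hS g⁻¹

theorem wl_eq_one (S : Finset G) (hS : Generates S) (g : G) (h : wordLength S g = 0) :
    g = 1 := by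
  obtain ⟨l, h1, h2, h3⟩ := wl_exists S hS g
  rw [h] at h1
  rw [List.eq_nil_of_length_eq_zero h1] at h3
  simpa using h3.symm

theorem wl_unbounded [Infinite G] (S : Finset G) (hS : Generates S) (m : ℕ) :
    ∃ g : G, m ≤ wordLength S g := by
  by_contra! hcon
  let T : Set G := {a | a ∈ S ∨ a⁻¹ ∈ S}
  have hT : T.Finite := by
    have : T = (S : Set G) ∪ (S : Set G)⁻¹ := by ext; simp [T]
    rw [this]
    exact S.finite_toSet.union S.finite_toSet.inv
  haveI : Finite T := hT
  have hfin : ((fun l : List T => (l.map Subtype.val).prod) ''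
      {l : List T | l.length ≤ m}).Finite := (List.finite_length_le T m).image _
  refine Set.infinite_univ (α := G) (hfin.subset ?_)
  intro g _
  obtain ⟨l, h1, h2, h3⟩ := wl_exists S hS g
  lift l to List T using h2
  refine ⟨l, ?_, h3⟩
  have := hcon g
  simp at h1 ⊢
  omega

theorem wl_geodesic [Infinite G] (S : Finset G) (hS : Generates S) (m : ℕ) :
    ∃ p : ℕ → G, ∀ i j, i ≤ j → j ≤ m → wordLength S ((p i)⁻¹ * p j) = j - i := by
  obtain ⟨g, hg⟩ := wl_unbounded S hS m
  obtain ⟨l, h1, h2, h3⟩ := wl_exists S hS g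
  refine ⟨fun i => (l.take i).prod, fun i j hij hjm => ?_⟩
  have hpre : ∀ i j, i ≤ j → ((l.take i).prod)⁻¹ * (l.take j).prod
      = ((l.drop i).take (j - i)).prod := by
    intro i j hij
    rw [inv_mul_eq_iff_eq_mul, ← List.prod_append, ← List.take_add]
    congr 2; omega
  have hup : ∀ i j, i ≤ j → wordLength S (((l.take i).prod)⁻¹ * (l.take j).prod) ≤ j - i := by
    intro i j hij
    rw [hpre i j hij]
    refine (wl_le S _ fun a ha => h2 a (List.mem_of_mem_drop (List.mem_of_mem_take ha))).trans ?_
    simp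
  have e1 := hup 0 i (Nat.zero_le _)
  have e2 := hup i j hij
  have e3 := hup j l.length (by omega)
  have e4 := wl_mul S hS (((l.take 0).prod)⁻¹ * (l.take i).prod)
    ((((l.take i).prod)⁻¹ * (l.take j).prod) * (((l.take j).prod)⁻¹ * (l.take l.length).prod))
  have e5 := wl_mul S hS (((l.take i).prod)⁻¹ * (l.take j).prod)
    (((l.take j).prod)⁻¹ * (l.take l.length).prod)
  have e6 : (((l.take 0).prod)⁻¹ * (l.take i).prod) *
    ((((l.take i).prod)⁻¹ * (l.take j).prod) * (((l.take j).prod)⁻¹ * (l.take l.length).prod))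
      = g := by
    rw [← h3]; simp only [List.take_length, List.take_zero, List.prod_nil]; group
  rw [e6] at e4
  show wordLength S (((l.take i).prod)⁻¹ * (l.take j).prod) = j - i
  omega

theorem wd_nonneg (S : Finset G) (x y : G) : 0 ≤ wordDist S x y := Nat.cast_nonneg _

theorem wd_symm (S : Finset G) (hS : Generates S) (x y : G) :
    wordDist S x y = wordDist S y x := by
  unfold wordDist
  rw [← wl_inv S hS (x⁻¹ * y)]
  simp

theorem wd_tri (S : Finset G) (hS : Generates S) (x y z : G) :
    wordDist S x z ≤ wordDist S x y + wordDist S y z := by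
  unfold wordDist
  have := wl_mul S hS (x⁻¹ * y) (y⁻¹ * z)
  rw [show x⁻¹ * y * (y⁻¹ * z) = x⁻¹ * z by group] at this
  exact_mod_cast this

theorem wd_not_hyp [Infinite G] (S : Finset G) (hS : Generates S) :
    ¬ IsHyperbolic (fun x y : G => wordDist S x y + Real.log (1 + wordDist S x y)) := by
  rintro ⟨δ, hδ, H⟩
  obtain ⟨t, ht⟩ := exists_nat_gt δ
  obtain ⟨n, hn⟩ := exists_nat_gt (2 * Real.exp (2 * δ) * (1 + t))
  obtain ⟨p, hp⟩ := wl_geodesic S hS (2 * n + t)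
  have hd : ∀ i j, i ≤ j → j ≤ 2 * n + t → wordDist S (p i) (p j) = (j : ℝ) - i := by
    intro i j hij hj
    unfold wordDist
    rw [hp i j hij hj, Nat.cast_sub hij]
  have hd' : ∀ i j, i ≤ j → j ≤ 2 * n + t → wordDist S (p j) (p i) = (j : ℝ) - i := by
    intro i j hij hj
    rw [wd_symm S hS, hd i j hij hj]
  have h := H (p 0) (p (n + t)) (p n) (p (2 * n + t))
  simp only [gromov] at h
  rw [hd' 0 (n + t) (by omega) (by omega), hd' 0 n (by omega) (by omega),
    hd' n (n + t) (by omega) (by omega), hd' 0 (2 * n + t) (by omega) (by omega),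
    hd (n + t) (2 * n + t) (by omega) (by omega), hd n (2 * n + t) (by omega) (by omega)] at h
  push_cast at h
  have hn0 : (0 : ℝ) ≤ n := Nat.cast_nonneg n
  have ht0 : (0 : ℝ) ≤ t := Nat.cast_nonneg t
  rw [show (1 : ℝ) + (n + t - 0) = 1 + n + t by ring, show (1 : ℝ) + (n - 0) = 1 + n by ring,
    show (1 : ℝ) + (n + t - n) = 1 + t by ring,
    show (1 : ℝ) + (2 * n + t - 0) = 1 + 2 * n + t by ring,
    show (1 : ℝ) + (2 * n + t - (n + t)) = 1 + n by ring,
    show (1 : ℝ) + (2 * n + t - n) = 1 + n + t by ring] at h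
  have l1 : Real.log (1 + n) ≤ Real.log (1 + n + t) :=
    Real.log_le_log (by positivity) (by linarith)
  have l2 : Real.log (1 + 2 * n + t) ≤ Real.log 2 + Real.log (1 + n + t) := by
    rw [← Real.log_mul (by norm_num) (by positivity)]
    exact Real.log_le_log (by positivity) (by linarith)
  have l3 : Real.log 2 + 2 * δ + Real.log (1 + t) < Real.log (1 + n + t) := by
    rw [show 2 * δ = Real.log (Real.exp (2 * δ)) from (Real.log_exp _).symm,
      ← Real.log_mul (by norm_num) (by positivity), ← Real.log_mul (by positivity) (by positivity)]
    exact Real.log_lt_log (by positivity) (by linarith)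
  rcases min_choice
    (((n : ℝ) + t - 0 + Real.log (1 + n + t) + (n - 0 + Real.log (1 + n)) -
      (n + t - n + Real.log (1 + t))) / 2)
    (((n : ℝ) + t - 0 + Real.log (1 + n + t) + (2 * n + t - 0 + Real.log (1 + 2 * n + t)) -
      (2 * n + t - (n + t) + Real.log (1 + n))) / 2) with h' | h'
  · rw [h'] at h
    linarith
  · rw [h'] at h
    linarith

/-- **Proposition 1.12 / §A.5.**  On any (infinite) hyperbolic group, the left-invariant
metric `d(x,y) = |x⁻¹y| + log(1 + |x⁻¹y|)` is a metric quasi-isometric to the word metric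
(indeed `|x⁻¹y| ≤ d(x,y) ≤ 2|x⁻¹y|`) which is not Gromov hyperbolic. -/
theorem nonhyperbolic_invariant_metric
    {G : Type*} [Group G] [Infinite G]
    (S : Finset G) (hS : Generates S) (hhyp : IsHyperbolic (wordDist S)) :
    IsMetricFun (fun x y : G => wordDist S x y + Real.log (1 + wordDist S x y)) ∧
    LeftInvariant (fun x y : G => wordDist S x y + Real.log (1 + wordDist S x y)) ∧
    (∀ x y : G,
      wordDist S x y ≤ wordDist S x y + Real.log (1 + wordDist S x y) ∧
      wordDist S x y + Real.log (1 + wordDist S x y) ≤ 2 * wordDist S x y) ∧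
    QuasiIsometric (fun x y : G => wordDist S x y + Real.log (1 + wordDist S x y))
      (wordDist S) ∧
    ¬ IsHyperbolic (fun x y : G => wordDist S x y + Real.log (1 + wordDist S x y)) := by
  have hnn := wd_nonneg S
  have hlog0 : ∀ x y : G, 0 ≤ Real.log (1 + wordDist S x y) := fun x y =>
    Real.log_nonneg (by linarith [hnn x y])
  have hlog1 : ∀ x y : G, Real.log (1 + wordDist S x y) ≤ wordDist S x y := fun x y => by
    have := Real.log_le_sub_one_of_pos (show 0 < 1 + wordDist S x y by linarith [hnn x y])
    linarith
  refine ⟨⟨?_, ?_, ?_, ?_⟩, ?_, ?_, ?_, wd_not_hyp S hS⟩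
  · intro x
    simp [wordDist, wl_one]
  · intro x y hxy
    have : 0 < wordDist S x y := by
      unfold wordDist
      rw [Nat.cast_pos, Nat.pos_iff_ne_zero]
      intro h0
      exact hxy (inv_mul_eq_one.1 (wl_eq_one S hS _ h0))
    have := hlog0 x y
    show 0 < wordDist S x y + Real.log (1 + wordDist S x y)
    linarith
  · intro x y
    simp only [wd_symm S hS x y]
  · intro x y z
    have h1 := wd_tri S hS x y z
    have h2 : Real.log (1 + wordDist S x z) ≤
        Real.log (1 + wordDist S x y) + Real.log (1 + wordDist S y z) := by
      have a := hnn x y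
      have b := hnn y z
      have c := hnn x z
      rw [← Real.log_mul (by linarith) (by linarith)]
      exact Real.log_le_log (by linarith) (by nlinarith [mul_nonneg a b])
    show wordDist S x z + Real.log (1 + wordDist S x z) ≤
      wordDist S x y + Real.log (1 + wordDist S x y) +
        (wordDist S y z + Real.log (1 + wordDist S y z))
    linarith
  · intro g x y
    have : wordDist S (g * x) (g * y) = wordDist S x y := by
      unfold wordDist
      congr 2
      group
    simp only [this]
  · intro x y
    constructor
    · linarith [hlog0 x y]
    · linarith [hlog1 x y]
  · refine ⟨id, 2, 0, 0, by norm_num, le_refl _, le_refl _, ?_, ?_⟩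
    · intro x y
      simp only [id]
      constructor
      · linarith [hlog1 x y]
      · linarith [hlog0 x y, hnn x y]
    · intro y
      refine ⟨y, ?_⟩
      simp [wordDist, wl_one]

end GHM
end
end
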